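/- The correspondence Δ ↦ 𝗪(Δ) is a faithful representation of the algebra A_∞° by differential operators: for all Young diagrams Δ₁, Δ₂, the composition of operators on ℚ[p₁,p₂,…] satisfies 𝗪(Δ₁) ∘ 𝗪(Δ₂) = Σ_Δ C^Δ_{Δ₁Δ₂} 𝗪(Δ), where C^Δ_{Δ₁Δ₂} are the structure constants of the algebra A_∞° (so the sum runs over Δ with max(|Δ₁|,|Δ₂|) ≤ |Δ| ≤ |Δ₁|+|Δ₂|); moreover, the operators 𝗪(Δ), with Δ ranging over all Young diagrams, are linearly independent over ℚ. -/

import Mathlib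

open scoped Classical

/-- The full cycle type of a permutation of `Fin n`, including fixed points
(i.e. rows of length 1). -/
noncomputable def fullCycleType {n : ℕ} (g : Equiv.Perm (Fin n)) : Multiset ℕ :=
  g.cycleType + Multiset.replicate (n - g.cycleType.sum) 1

/-- `Δ^k` : the Young diagram obtained from `Δ` by adding `k` rows of length 1,
realized as a partition of a given `m ≥ |Δ| `. -/
def padTo {n : ℕ} (Δ : n.Partition) (m : ℕ) (h : n ≤ m) : m.Partition where
  parts := Δ.parts + Multiset.replicate (m - n) 1
  parts_pos := by
    intro i hi
    rcases Multiset.mem_add.mp hi with h1 | h2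
    · exact Δ.parts_pos h1
    · simp [Multiset.eq_of_mem_replicate h2]
  parts_sum := by
    simp [Δ.parts_sum]
    omega

/-- The class sum `G_n(Δ)` : sum of all permutations of cycle type `Δ` in the group
algebra `ℚ[S_n]`. -/
noncomputable def classSum (n : ℕ) (Δ : n.Partition) :
    MonoidAlgebra ℚ (Equiv.Perm (Fin n)) :=
  ∑ g ∈ Finset.univ.filter (fun g => fullCycleType g = Δ.parts),
    MonoidAlgebra.single g (1 : ℚ)

/-- The coordinates of a central element of `ℚ[S_n]` in the basis of class sums:
the (average) coefficient on the conjugacy class of cycle type `Δ`. -/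
noncomputable def classCoeff {n : ℕ} (x : MonoidAlgebra ℚ (Equiv.Perm (Fin n)))
    (Δ : n.Partition) : ℚ :=
  (∑ g ∈ Finset.univ.filter (fun g => fullCycleType g = Δ.parts), x.coeff g) /
    ((Finset.univ.filter (fun g : Equiv.Perm (Fin n) => fullCycleType g = Δ.parts)).card : ℚ)

/-- An element of `A_n` (the centre of `ℚ[S_n]`), written in coordinates with respect to
the basis of class sums, viewed inside the group algebra. -/
noncomputable def embedCenter {n : ℕ} (x : n.Partition → ℚ) :
    MonoidAlgebra ℚ (Equiv.Perm (Fin n)) :=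
  ∑ Δ : n.Partition, x Δ • classSum n Δ

/-- The product `∘` of the algebra `A_n` in the coordinates given by class sums. -/
noncomputable def circ {n : ℕ} (x y : n.Partition → ℚ) : n.Partition → ℚ :=
  fun Δ => classCoeff (embedCenter x * embedCenter y) Δ

/-- The coordinates of a single Young diagram `Δ`, i.e. of the class sum `G_n(Δ) ∈ A_n`. -/
noncomputable def diagC {n : ℕ} (Δ : n.Partition) : n.Partition → ℚ :=
  fun Λ => if Λ = Δ then 1 else 0

/-- The padding map `ρ_{m-n} : A_n → A_m`,
`ρ_k(Δ) = ((r+k)!/(r!·k!))·Δ^k` where `r` is the number of rows of length 1 of `Δ`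
(in class-sum coordinates); it is `0` when `m < n`. -/
noncomputable def rhoTo {n : ℕ} (m : ℕ) (x : n.Partition → ℚ) : m.Partition → ℚ :=
  fun Λ =>
    if n ≤ m then
      ∑ Δ : n.Partition,
        (if Λ.parts = Δ.parts + Multiset.replicate (m - n) 1 then
          (((Δ.parts.count 1 + (m - n)).factorial : ℚ) /
            ((Δ.parts.count 1).factorial * (m - n).factorial)) * x Δ
        else 0)
    else 0

/-- The element `{Δ₁Δ₂}_n ∈ A_n`, defined by the recursion
`{Δ₁Δ₂}_n = ρ_{n−|Δ₁|}(Δ₁) ∘ ρ_{n−|Δ₂|}(Δ₂) − Σ_{k=max(|Δ₁|,|Δ₂|)}^{n−1} ρ_{n−k}({Δ₁Δ₂}_k)`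
for `max(|Δ₁|,|Δ₂|) ≤ n ≤ |Δ₁|+|Δ₂|` (and `0` outside this range). -/
noncomputable def bracket {n₁ n₂ : ℕ} (Δ₁ : n₁.Partition) (Δ₂ : n₂.Partition) :
    (n : ℕ) → n.Partition → ℚ
  | n =>
    if max n₁ n₂ ≤ n ∧ n ≤ n₁ + n₂ then
      circ (rhoTo n (diagC Δ₁)) (rhoTo n (diagC Δ₂)) -
        ∑ k ∈ (Finset.Ico (max n₁ n₂) n).attach,
          rhoTo n (bracket Δ₁ Δ₂ k.1)
    else 0
  termination_by n => n
  decreasing_by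
    have := Finset.mem_Ico.mp k.2
    omega

/-- The underlying graded vector space of the algebra `A_∞° = ⊕_n A_n`. -/
abbrev Ainf : Type := Π₀ n : ℕ, (Nat.Partition n → ℚ)

/-- A Young diagram `Δ` as an element of `A_∞°`. -/
noncomputable def ofDiag {n : ℕ} (Δ : n.Partition) : Ainf :=
  DFinsupp.single n (diagC Δ)

/-- The product of two Young diagrams in `A_∞°`:
`Δ₁·Δ₂ = Σ_{n=max(|Δ₁|,|Δ₂|)}^{|Δ₁|+|Δ₂|} {Δ₁Δ₂}_n`. -/
noncomputable def diagMul {n₁ n₂ : ℕ} (Δ₁ : n₁.Partition) (Δ₂ : n₂.Partition) : Ainf :=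
  ∑ n ∈ Finset.Icc (max n₁ n₂) (n₁ + n₂), DFinsupp.single n (bracket Δ₁ Δ₂ n)

/-- The bilinear extension of the product of Young diagrams to all of `A_∞°`. -/
noncomputable def mulAinf (x y : Ainf) : Ainf :=
  ∑ n₁ ∈ x.support, ∑ n₂ ∈ y.support,
    ∑ Δ₁ : Nat.Partition n₁, ∑ Δ₂ : Nat.Partition n₂,
      (x n₁ Δ₁ * y n₂ Δ₂) • diagMul Δ₁ Δ₂


/-- The polynomial ring `ℚ[X_{ij} : 1 ≤ i,j ≤ N]` in the entries of an `N×N` matrix of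
independent variables. -/
abbrev RN (N : ℕ) : Type := MvPolynomial (Fin N × Fin N) ℚ

/-- The `N×N` matrix `X` of independent variables. -/
noncomputable def XM (N : ℕ) : Matrix (Fin N) (Fin N) (RN N) :=
  Matrix.of fun i j => MvPolynomial.X (i, j)

/-- The power sums `p_k = tr X^k`. -/
noncomputable def pSub (N : ℕ) (k : ℕ+) : RN N := Matrix.trace ((XM N) ^ (k : ℕ))

/-- Substitution `F ↦ F(p(X))` of `p_k = tr X^k` into a polynomial in `p₁, p₂, …`
(the variable of index `k : ℕ+` is `p_k`). -/
noncomputable def psubst (N : ℕ) : MvPolynomial ℕ+ ℚ →ₐ[ℚ] RN N :=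
  MvPolynomial.aeval (pSub N)

/-- The operator `D_{ab} = Σ_{e=1}^N X_{ae} ∂/∂X_{be}`. -/
noncomputable def DN (N : ℕ) (a b : Fin N) (P : RN N) : RN N :=
  ∑ e : Fin N, MvPolynomial.X (a, e) * MvPolynomial.pderiv (b, e) P

/-- The normally ordered operator
`:D_{a₁b₁}⋯D_{a_nb_n}: = Σ_{e₁,…,e_n=1}^N X_{a₁e₁}⋯X_{a_ne_n} ∂ⁿ/(∂X_{b₁e₁}⋯∂X_{b_ne_n})`. -/
noncomputable def NOpN (N : ℕ) {n : ℕ} (a b : Fin n → Fin N) (P : RN N) : RN N :=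
  ∑ e : Fin n → Fin N,
    (∏ i, MvPolynomial.X (a i, e i)) *
      (List.ofFn (fun i => ((b i, e i) : Fin N × Fin N))).foldr
        (fun v G => MvPolynomial.pderiv v G) P


/-- `κ(Δ) = (∏_k m_k! k^{m_k})⁻¹` where `m_k` is the number of rows of length `k`. -/
noncomputable def kappa (parts : Multiset ℕ) : ℚ :=
  (∏ k ∈ parts.toFinset, (((parts.count k).factorial : ℚ) * (k : ℚ) ^ (parts.count k)))⁻¹

/-- The operator `𝒲_N(Δ) = κ(Δ) Σ_{a₁,…,a_n=1}^N :D_{a₁a_{g(1)}}⋯D_{a_na_{g(n)}}:`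
computed from a permutation `g` of cycle type `Δ`. -/
noncomputable def WN (N : ℕ) {n : ℕ} (Δ : Nat.Partition n) (g : Equiv.Perm (Fin n))
    (P : RN N) : RN N :=
  kappa Δ.parts • ∑ a : Fin n → Fin N, NOpN N a (fun i => a (g i)) P

/-- cyclic shift matrix -/
noncomputable def shiftM (n : ℕ) [NeZero n] : Matrix (ZMod n) (ZMod n) ℂ :=
  Matrix.of fun i j => if j = i + 1 then 1 else 0

lemma shiftM_apply (n : ℕ) [NeZero n] (i j : ZMod n) :
    shiftM n i j = if j = i + 1 then 1 else 0 := rfl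

lemma shiftM_pow (n : ℕ) [NeZero n] (k : ℕ) (i j : ZMod n) :
    (shiftM n ^ k) i j = if j = i + (k : ZMod n) then 1 else 0 := by
  induction k generalizing i j with
  | zero => simp [Matrix.one_apply, eq_comm]
  | succ k ih =>
    rw [pow_succ, Matrix.mul_apply]
    simp only [ih, shiftM_apply, ite_mul, one_mul, zero_mul]
    rw [Finset.sum_ite_eq' Finset.univ (i + (k : ZMod n))]
    simp [add_assoc]

lemma trace_shiftM_pow (n : ℕ) [NeZero n] (k : ℕ) :
    Matrix.trace (shiftM n ^ k) = if n ∣ k then (n : ℂ) else 0 := by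
  simp only [Matrix.trace, Matrix.diag, shiftM_pow]
  have : ∀ i : ZMod n, (i = i + (k : ZMod n)) ↔ n ∣ k := by
    intro i
    rw [← ZMod.natCast_eq_zero_iff]
    constructor
    · intro h; simpa using h.symm
    · intro h; simp [h]
  simp only [this]
  split_ifs <;> simp

lemma exists_matrix_traces (v : ℕ → ℂ) (K : ℕ) :
    ∃ (N : ℕ) (A : Matrix (Fin N) (Fin N) ℂ), ∀ k, 1 ≤ k → k ≤ K → Matrix.trace (A ^ k) = v k := by
  induction K with
  | zero => exact ⟨0, 0, fun k h1 h2 => by omega⟩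
  | succ K ih =>
    obtain ⟨N, A, hA⟩ := ih
    obtain ⟨t, ht⟩ := IsAlgClosed.exists_pow_nat_eq
      ((v (K+1) - Matrix.trace (A ^ (K+1))) / ((K+1 : ℕ) : ℂ)) (Nat.succ_pos K)
    let B : Matrix (Fin N ⊕ ZMod (K+1)) (Fin N ⊕ ZMod (K+1)) ℂ :=
      Matrix.fromBlocks A 0 0 (t • shiftM (K+1))
    have hB : ∀ k, Matrix.trace (B ^ k) = Matrix.trace (A ^ k) +
        t ^ k * (if (K+1) ∣ k then ((K+1 : ℕ) : ℂ) else 0) := by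
      intro k
      rw [Matrix.fromBlocks_diagonal_pow, smul_pow, ← trace_shiftM_pow]
      simp [Matrix.trace]
      rw [Finset.mul_sum]
    let e := Fintype.equivFin (Fin N ⊕ ZMod (K+1))
    refine ⟨_, Matrix.reindexAlgEquiv ℂ ℂ e B, ?_⟩
    intro k h1 h2
    have : Matrix.trace ((Matrix.reindexAlgEquiv ℂ ℂ e B) ^ k) = Matrix.trace (B ^ k) := by
      rw [← map_pow]
      simp only [Matrix.trace, Matrix.diag, Matrix.coe_reindexAlgEquiv, Matrix.reindex_apply,
        Matrix.submatrix_apply]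
      exact Equiv.sum_comp e.symm (fun i => (B ^ k) i i)
    rw [this, hB]
    rcases Nat.lt_or_ge k (K+1) with h | h
    · rw [if_neg (fun hd => by have := Nat.le_of_dvd h1 hd; omega), mul_zero, add_zero]
      exact hA k h1 (by omega)
    · obtain rfl : k = K + 1 := by omega
      rw [if_pos dvd_rfl, ht, div_mul_cancel₀]
      · ring
      · exact_mod_cast Nat.succ_ne_zero K

lemma psubst_eval (N : ℕ) (A : Matrix (Fin N) (Fin N) ℂ) (F : MvPolynomial ℕ+ ℚ) :
    MvPolynomial.aeval (fun ij : Fin N × Fin N => A ij.1 ij.2) (psubst N F) =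
      MvPolynomial.aeval (fun k : ℕ+ => Matrix.trace (A ^ (k : ℕ))) F := by
  unfold psubst
  rw [← AlgHom.comp_apply]
  congr 1
  ext k
  simp only [AlgHom.comp_apply, MvPolynomial.aeval_X, pSub]
  set φ : RN N →ₐ[ℚ] ℂ := MvPolynomial.aeval (fun ij : Fin N × Fin N => A ij.1 ij.2)
  have h1 : φ.toRingHom.mapMatrix (XM N) = A := by
    ext i j
    simp [XM, φ]
  have h2 : φ (Matrix.trace (XM N ^ (k : ℕ))) = Matrix.trace (φ.toRingHom.mapMatrix (XM N ^ (k:ℕ))) := by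
    simp [Matrix.trace]
  rw [h2, map_pow, h1]

lemma psubst_jointly_injective (F : MvPolynomial ℕ+ ℚ) (hF : ∀ N, psubst N F = 0) : F = 0 := by
  have h : MvPolynomial.map (algebraMap ℚ ℂ) F = 0 := by
    apply MvPolynomial.funext
    intro v
    obtain ⟨K, hK⟩ : ∃ K : ℕ, ∀ k ∈ F.vars, (k : ℕ) ≤ K :=
      ⟨F.vars.sup (fun k => (k : ℕ)), fun k hk => Finset.le_sup (f := fun k : ℕ+ => (k : ℕ)) hk⟩
    obtain ⟨N, A, hA⟩ := exists_matrix_traces (fun k => if h : 0 < k then v ⟨k, h⟩ else 0) K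
    have h1 := psubst_eval N A F
    rw [hF N, map_zero] at h1
    rw [MvPolynomial.eval_map, map_zero]
    change MvPolynomial.aeval v F = 0
    rw [h1, MvPolynomial.aeval_def, MvPolynomial.aeval_def]
    apply MvPolynomial.eval₂Hom_congr' rfl _ rfl
    intro i hi _
    rw [hA i i.pos (hK i hi), dif_pos i.pos]
    rfl
  exact MvPolynomial.map_injective _ (algebraMap ℚ ℂ).injective (by simpa using h)


/-- multiplication by a variable -/
noncomputable def mX {N : ℕ} (v : Fin N × Fin N) : RN N →ₗ[ℚ] RN N :=
  LinearMap.mulLeft ℚ (MvPolynomial.X v : RN N)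

/-- `L` is a differential operator of order `≤ m` (Grothendieck). -/
def OrdLe {N : ℕ} : ℕ → (RN N →ₗ[ℚ] RN N) → Prop
  | 0, L => ∀ v, L ∘ₗ mX v - mX v ∘ₗ L = 0
  | m + 1, L => ∀ v, OrdLe m (L ∘ₗ mX v - mX v ∘ₗ L)

lemma OrdLe.zero {N : ℕ} (m : ℕ) : OrdLe m (0 : RN N →ₗ[ℚ] RN N) := by
  induction m with
  | zero => intro v; simp
  | succ m ih => intro v; simpa using ih

lemma OrdLe.add {N : ℕ} {m : ℕ} {A B : RN N →ₗ[ℚ] RN N} (hA : OrdLe m A) (hB : OrdLe m B) :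
    OrdLe m (A + B) := by
  induction m generalizing A B with
  | zero =>
    intro v
    have := congrArg₂ (· + ·) (hA v) (hB v)
    simp only [add_zero] at this
    rw [← this, LinearMap.add_comp, LinearMap.comp_add]; abel
  | succ m ih =>
    intro v
    have := ih (hA v) (hB v)
    convert! this using 1
    rw [LinearMap.add_comp, LinearMap.comp_add]; abel

lemma comm_smul {N : ℕ} (c : ℚ) (A : RN N →ₗ[ℚ] RN N) (v : Fin N × Fin N) :
    (c • A) ∘ₗ mX v - mX v ∘ₗ (c • A) = c • (A ∘ₗ mX v - mX v ∘ₗ A) := by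
  apply LinearMap.ext
  intro P
  simp only [LinearMap.sub_apply, LinearMap.comp_apply, LinearMap.smul_apply, map_smul, smul_sub]

lemma OrdLe.smul {N : ℕ} {m : ℕ} {A : RN N →ₗ[ℚ] RN N} (c : ℚ) (hA : OrdLe m A) :
    OrdLe m (c • A) := by
  induction m generalizing A with
  | zero =>
    intro v
    rw [comm_smul, hA v, smul_zero]
  | succ m ih =>
    intro v
    rw [comm_smul]
    exact ih (hA v)

lemma OrdLe.sum {N : ℕ} {m : ℕ} {ι : Type*} (s : Finset ι) (A : ι → RN N →ₗ[ℚ] RN N)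
    (hA : ∀ i ∈ s, OrdLe m (A i)) : OrdLe m (∑ i ∈ s, A i) := by
  induction s using Finset.induction_on with
  | empty => simpa using OrdLe.zero m
  | insert i s hi ih =>
    rw [Finset.sum_insert hi]
    exact (hA i (by simp)).add (ih fun j hj => hA j (by simp [hj]))

lemma OrdLe.succ {N : ℕ} {m : ℕ} {A : RN N →ₗ[ℚ] RN N} (hA : OrdLe m A) : OrdLe (m + 1) A := by
  induction m generalizing A with
  | zero => intro v; rw [hA v]; exact OrdLe.zero 0
  | succ m ih => intro v; exact ih (hA v)

lemma OrdLe.mono {N : ℕ} {m k : ℕ} {A : RN N →ₗ[ℚ] RN N} (h : m ≤ k) (hA : OrdLe m A) :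
    OrdLe k A := by
  induction h with
  | refl => exact hA
  | step _ ih => exact ih.succ

lemma comm_comp {N : ℕ} (A B : RN N →ₗ[ℚ] RN N) (v : Fin N × Fin N) :
    (A ∘ₗ B) ∘ₗ mX v - mX v ∘ₗ (A ∘ₗ B) =
      A ∘ₗ (B ∘ₗ mX v - mX v ∘ₗ B) + (A ∘ₗ mX v - mX v ∘ₗ A) ∘ₗ B := by
  ext P; simp

lemma OrdLe.comp {N : ℕ} (s : ℕ) : ∀ {a b : ℕ} {A B : RN N →ₗ[ℚ] RN N}, a + b = s →
    OrdLe a A → OrdLe b B → OrdLe s (A ∘ₗ B) := by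
  induction s with
  | zero =>
    intro a b A B h hA hB v
    obtain rfl : a = 0 := by omega
    obtain rfl : b = 0 := by omega
    rw [comm_comp, hA v, hB v]; simp
  | succ s ih =>
    intro a b A B h hA hB v
    rw [comm_comp]
    apply OrdLe.add
    · cases b with
      | zero => rw [hB v, LinearMap.comp_zero]; exact OrdLe.zero _
      | succ b => exact ih (by omega) hA (hB v)
    · cases a with
      | zero => rw [hA v, LinearMap.zero_comp]; exact OrdLe.zero _
      | succ a => exact ih (by omega) (hA v) hB

lemma ordLe_mulLeft {N : ℕ} (P : RN N) : OrdLe 0 (LinearMap.mulLeft ℚ P) := by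
  intro v
  apply LinearMap.ext
  intro Q
  simp only [mX, LinearMap.sub_apply, LinearMap.comp_apply, LinearMap.mulLeft_apply,
    LinearMap.zero_apply]
  ring

lemma ordLe_pderiv {N : ℕ} (w : Fin N × Fin N) :
    OrdLe 1 ((MvPolynomial.pderiv w : Derivation ℚ (RN N) (RN N)).toLinearMap) := by
  intro v
  have : (MvPolynomial.pderiv w : Derivation ℚ (RN N) (RN N)).toLinearMap ∘ₗ mX v -
      mX v ∘ₗ (MvPolynomial.pderiv w : Derivation ℚ (RN N) (RN N)).toLinearMap =
      LinearMap.mulLeft ℚ (MvPolynomial.pderiv w (MvPolynomial.X v)) := by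
    apply LinearMap.ext
    intro Q
    simp only [mX, LinearMap.sub_apply, LinearMap.comp_apply, LinearMap.mulLeft_apply,
      Derivation.coeFn_coe, Derivation.leibniz, smul_eq_mul]
    ring
  rw [this]
  exact ordLe_mulLeft _

/-- monomial `∏ X (u j)` -/
noncomputable def Mon {N d : ℕ} (u : Fin d → Fin N × Fin N) : RN N :=
  ∏ j, MvPolynomial.X (u j)

lemma OrdLe.eq_zero {N : ℕ} {m : ℕ} {L : RN N →ₗ[ℚ] RN N} (hL : OrdLe m L)
    (h : ∀ d, d ≤ m → ∀ u : Fin d → Fin N × Fin N, L (Mon u) = 0) : L = 0 := by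
  have key : ∀ L : RN N →ₗ[ℚ] RN N, L 1 = 0 → (∀ v, L ∘ₗ mX v - mX v ∘ₗ L = 0) → L = 0 := by
    intro L h1 hv
    apply LinearMap.ext
    intro P
    rw [LinearMap.zero_apply]
    induction P using MvPolynomial.induction_on with
    | C a => 
      have : (MvPolynomial.C a : RN N) = a • 1 := by
        rw [MvPolynomial.smul_eq_C_mul, mul_one]
      rw [this, map_smul, h1, smul_zero]
    | add p q hp hq => rw [map_add, hp, hq, add_zero]
    | mul_X p v hp =>
      have := LinearMap.congr_fun (hv v) p
      simp only [mX, LinearMap.sub_apply, LinearMap.comp_apply, LinearMap.mulLeft_apply, hp,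
        mul_zero, sub_zero, LinearMap.zero_apply] at this
      rw [mul_comm, this]
  have h1 : ∀ (m : ℕ) (L : RN N →ₗ[ℚ] RN N),
      (∀ d, d ≤ m → ∀ u : Fin d → Fin N × Fin N, L (Mon u) = 0) → L 1 = 0 := by
    intro m L h
    have := h 0 (Nat.zero_le _) Fin.elim0
    simpa [Mon] using this
  induction m generalizing L with
  | zero => exact key L (h1 0 L h) hL
  | succ m ih =>
    apply key L (h1 _ L h)
    intro v
    apply ih (hL v)
    intro d hd u
    have h2 := h (d+1) (by omega) (Fin.cons v u)
    have h3 := h d (by omega) u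
    have h4 : (Mon (Fin.cons v u : Fin (d+1) → Fin N × Fin N)) = MvPolynomial.X v * Mon u := by
      simp [Mon, Fin.prod_univ_succ]
    simp only [mX, LinearMap.sub_apply, LinearMap.comp_apply, LinearMap.mulLeft_apply, h3,
        mul_zero, sub_zero]
    rw [← h4, h2]

/-- iterated partial derivatives -/
noncomputable def pdL {N : ℕ} : List (Fin N × Fin N) → (RN N →ₗ[ℚ] RN N)
  | [] => LinearMap.id
  | v :: l => (MvPolynomial.pderiv v : Derivation ℚ (RN N) (RN N)).toLinearMap ∘ₗ pdL l

lemma pdL_apply {N : ℕ} (l : List (Fin N × Fin N)) (P : RN N) :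
    pdL l P = l.foldr (fun v G => MvPolynomial.pderiv v G) P := by
  induction l with
  | nil => rfl
  | cons v l ih => simp [pdL, ih]

lemma ordLe_pdL {N : ℕ} (l : List (Fin N × Fin N)) : OrdLe l.length (pdL l) := by
  induction l with
  | nil => 
    intro v
    simp [pdL]
  | cons v l ih => exact OrdLe.comp _ (by simp [add_comm]) (ordLe_pderiv v) ih

/-- `WN` as a linear map -/
noncomputable def WL (N : ℕ) {n : ℕ} (Δ : Nat.Partition n) (g : Equiv.Perm (Fin n)) :
    RN N →ₗ[ℚ] RN N :=
  kappa Δ.parts • ∑ a : Fin n → Fin N, ∑ e : Fin n → Fin N,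
    LinearMap.mulLeft ℚ (∏ i, MvPolynomial.X (a i, e i) : RN N) ∘ₗ
      pdL (List.ofFn (fun i => ((a (g i), e i) : Fin N × Fin N)))

lemma WL_apply (N : ℕ) {n : ℕ} (Δ : Nat.Partition n) (g : Equiv.Perm (Fin n)) (P : RN N) :
    WL N Δ g P = WN N Δ g P := by
  simp [WL, WN, NOpN, pdL_apply, LinearMap.sum_apply]

lemma ordLe_WL (N : ℕ) {n : ℕ} (Δ : Nat.Partition n) (g : Equiv.Perm (Fin n)) :
    OrdLe n (WL N Δ g) := by
  apply OrdLe.smul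
  apply OrdLe.sum; intro a _
  apply OrdLe.sum; intro e _
  apply OrdLe.comp n (zero_add n) (ordLe_mulLeft _)
  have := ordLe_pdL (List.ofFn (fun i => ((a (g i), e i) : Fin N × Fin N)))
  simpa using this


lemma pderiv_prod_X {N d : ℕ} (w : Fin N × Fin N) (u : Fin d → Fin N × Fin N)
    (s : Finset (Fin d)) :
    MvPolynomial.pderiv w (∏ j ∈ s, MvPolynomial.X (u j) : RN N) =
      ∑ j ∈ s, if u j = w then ∏ k ∈ s.erase j, MvPolynomial.X (u k) else 0 := by
  induction s using Finset.induction_on with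
  | empty => simp
  | insert a s ha ih =>
    rw [Finset.prod_insert ha, Derivation.leibniz, ih, Finset.sum_insert ha,
      Finset.erase_insert ha, MvPolynomial.pderiv_X, smul_eq_mul, smul_eq_mul, Finset.mul_sum,
      add_comm]
    congr 1
    · by_cases h : u a = w
      · simp [h]
      · simp [h]
    · apply Finset.sum_congr rfl
      intro j hj
      have hja : j ≠ a := fun h => ha (h ▸ hj)
      rw [Finset.erase_insert_of_ne hja.symm, Finset.prod_insert (by simp [ha])]
      simp

lemma pdL_Mon {N d : ℕ} (u : Fin d → Fin N × Fin N) (n : ℕ) (v : Fin n → Fin N × Fin N) :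
    pdL (List.ofFn v) (Mon u) = ∑ ι : Fin n ↪ Fin d, if (∀ i, u (ι i) = v i) then
      ∏ j ∈ Finset.univ.filter (fun j => j ∉ Set.range ι), (MvPolynomial.X (u j) : RN N) else 0 := by
  induction n with
  | zero =>
    rw [Fintype.sum_eq_single (⟨Fin.elim0, fun i => i.elim0⟩ : Fin 0 ↪ Fin d)
      (fun x hx => absurd (by ext i; exact i.elim0) hx)]
    simp [pdL, Mon]
  | succ n ih =>
    rw [List.ofFn_succ, pdL, LinearMap.comp_apply, ih (fun i => v i.succ), map_sum,
      ← (Equiv.embeddingFinSucc n (Fin d)).symm.sum_comp, Fintype.sum_sigma]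
    apply Finset.sum_congr rfl
    intro ι _
    simp only [Equiv.coe_embeddingFinSucc_symm, Fin.forall_fin_succ, Fin.cons_zero, Fin.cons_succ]
    by_cases h : ∀ i, u (ι i) = v i.succ
    · simp only [h, implies_true, if_true, and_true, Derivation.coeFn_coe, pderiv_prod_X]
      rw [Finset.sum_subtype (p := fun i => i ∉ Set.range ι) _ (by simp)]
      apply Finset.sum_congr rfl
      intro j _
      congr 1
      apply Finset.prod_congr _ (fun _ _ => rfl)
      ext k
      simp [Fin.range_cons]
    · simp only [h, if_false, and_false, map_zero, Finset.sum_const_zero]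

/-- twist the row indices by a permutation -/
def twist {N d : ℕ} (h : Equiv.Perm (Fin d)) (u : Fin d → Fin N × Fin N) : Fin d → Fin N × Fin N :=
  fun j => ((u (h⁻¹ j)).1, (u j).2)

lemma twist_twist {N d : ℕ} (h k : Equiv.Perm (Fin d)) (u : Fin d → Fin N × Fin N) :
    twist h (twist k u) = twist (h * k) u := by
  ext j <;> simp [twist]

lemma Mon_twist {N d n : ℕ} (u : Fin d → Fin N × Fin N) (g : Equiv.Perm (Fin n))
    (ι : Fin n ↪ Fin d) :
    Mon (twist (g.viaFintypeEmbedding ι) u) =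
      (∏ i, (MvPolynomial.X ((u (ι (g⁻¹ i))).1, (u (ι i)).2) : RN N)) *
      ∏ j ∈ Finset.univ.filter (fun j => j ∉ Set.range ι), (MvPolynomial.X (u j) : RN N) := by
  rw [Mon, ← Finset.prod_filter_mul_prod_filter_not Finset.univ (fun j => j ∈ Set.range ι)]
  congr 1
  · have : Finset.univ.filter (fun j => j ∈ Set.range ι) = Finset.univ.map ι := by
      ext j; simp
    rw [this, Finset.prod_map]
    apply Finset.prod_congr rfl
    intro i _
    congr 1
    have : (g.viaFintypeEmbedding ι)⁻¹ (ι i) = ι (g⁻¹ i) := by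
      rw [Equiv.Perm.inv_eq_iff_eq, Equiv.Perm.viaFintypeEmbedding_apply_image]
      simp
    simp [twist, this]
  · apply Finset.prod_congr rfl
    intro j hj
    have hj' : j ∉ Set.range ι := by simpa using hj
    congr 1
    have : (g.viaFintypeEmbedding ι)⁻¹ j = j := by
      rw [Equiv.Perm.inv_eq_iff_eq, Equiv.Perm.viaFintypeEmbedding_apply_notMem_range _ _ hj']
    simp [twist, this]

lemma WL_Mon {N d n : ℕ} (Δ : Nat.Partition n) (g : Equiv.Perm (Fin n))
    (u : Fin d → Fin N × Fin N) :
    WL N Δ g (Mon u) =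
      kappa Δ.parts • ∑ ι : Fin n ↪ Fin d, Mon (twist (g.viaFintypeEmbedding ι) u) := by
  rw [WL, LinearMap.smul_apply]
  congr 1
  simp only [LinearMap.sum_apply, LinearMap.comp_apply, LinearMap.mulLeft_apply, pdL_Mon,
    Finset.mul_sum]
  have : ∀ a : Fin n → Fin N, ∑ e : Fin n → Fin N, ∑ ι : Fin n ↪ Fin d,
      ((∏ i, MvPolynomial.X (a i, e i) : RN N) * if (∀ i, u (ι i) = (a (g i), e i)) then
      ∏ j ∈ Finset.univ.filter (fun j => j ∉ Set.range ι), (MvPolynomial.X (u j) : RN N) else 0)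
      = ∑ ι : Fin n ↪ Fin d, ∑ e : Fin n → Fin N,
      ((∏ i, MvPolynomial.X (a i, e i) : RN N) * if (∀ i, u (ι i) = (a (g i), e i)) then
      ∏ j ∈ Finset.univ.filter (fun j => j ∉ Set.range ι), (MvPolynomial.X (u j) : RN N) else 0) :=
    fun a => Finset.sum_comm
  simp only [this]
  rw [Finset.sum_comm]
  apply Finset.sum_congr rfl
  intro ι _
  have hc : ∀ a e : Fin n → Fin N, (∀ i, u (ι i) = (a (g i), e i)) ↔
      (a = fun i => (u (ι (g⁻¹ i))).1) ∧ (e = fun i => (u (ι i)).2) := by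
    intro a e
    constructor
    · intro h
      constructor
      · ext i; rw [h]; simp
      · ext i; rw [h]
    · rintro ⟨rfl, rfl⟩ i
      simp
  simp only [hc, ite_and, mul_ite, mul_zero]
  rw [Mon_twist]
  simp


lemma cycleType_sum_le {d : ℕ} (h : Equiv.Perm (Fin d)) : h.cycleType.sum ≤ d := by
  rw [Equiv.Perm.sum_cycleType]
  simpa using Finset.card_le_univ h.support

/-- the partition of a permutation -/
noncomputable def ptype {d : ℕ} (h : Equiv.Perm (Fin d)) : d.Partition where
  parts := fullCycleType h
  parts_pos := by
    intro i hi
    rcases Multiset.mem_add.mp hi with h1 | h1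
    · exact lt_of_lt_of_le zero_lt_two (Equiv.Perm.two_le_of_mem_cycleType h1)
    · simp [Multiset.eq_of_mem_replicate h1]
  parts_sum := by
    have := cycleType_sum_le h
    simp [fullCycleType]
    omega

lemma ptype_eq_iff {d : ℕ} (h : Equiv.Perm (Fin d)) (Δ : d.Partition) :
    ptype h = Δ ↔ fullCycleType h = Δ.parts := by
  rw [Nat.Partition.ext_iff]; rfl

lemma one_notMem_cycleType {d : ℕ} (h : Equiv.Perm (Fin d)) : 1 ∉ h.cycleType := fun hh => by
  have := Equiv.Perm.two_le_of_mem_cycleType hh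
  omega

lemma cycleType_of_full {d : ℕ} (h : Equiv.Perm (Fin d)) :
    h.cycleType = (fullCycleType h).filter (fun x => x ≠ 1) := by
  rw [fullCycleType, Multiset.filter_add, Multiset.filter_eq_self.mpr, Multiset.filter_eq_nil.mpr]
  · simp
  · intro a ha; simp [Multiset.eq_of_mem_replicate ha]
  · intro a ha h1; exact one_notMem_cycleType h (h1 ▸ ha)

lemma full_eq_iff {d : ℕ} (h k : Equiv.Perm (Fin d)) :
    fullCycleType h = fullCycleType k ↔ h.cycleType = k.cycleType := by
  constructor
  · intro e; rw [cycleType_of_full, e, ← cycleType_of_full]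
  · intro e; rw [fullCycleType, e, fullCycleType]

lemma full_eq_iff_conj {d : ℕ} (h k : Equiv.Perm (Fin d)) :
    fullCycleType h = fullCycleType k ↔ ∃ σ : Equiv.Perm (Fin d), σ * h * σ⁻¹ = k := by
  rw [full_eq_iff, ← Equiv.Perm.isConj_iff_cycleType_eq, isConj_iff]

lemma exists_full {d : ℕ} (Δ : d.Partition) : ∃ g : Equiv.Perm (Fin d), fullCycleType g = Δ.parts := by
  have hs : Δ.parts = Δ.parts.filter (fun x => x ≠ 1) + Multiset.replicate (Δ.parts.count 1) 1 := by
    conv_lhs => rw [← Multiset.filter_add_not (fun x => x ≠ 1) Δ.parts]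
    congr 1
    simp only [ne_eq, not_not]
    exact Multiset.filter_eq' _ _
  have hsum : (Δ.parts.filter (fun x => x ≠ 1)).sum + Δ.parts.count 1 = d := by
    have := congrArg Multiset.sum hs
    rw [Multiset.sum_add, Δ.parts_sum] at this
    simpa using this.symm
  obtain ⟨g, hg⟩ := (Equiv.Perm.exists_with_cycleType_iff (Fin d)
    (m := Δ.parts.filter (fun x => x ≠ 1))).mpr ⟨by simp only [Fintype.card_fin]; omega, by
      intro a ha
      rw [Multiset.mem_filter] at ha
      have := Δ.parts_pos ha.1
      omega⟩
  refine ⟨g, ?_⟩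
  rw [fullCycleType, hg, hs.symm.symm]
  conv_rhs => rw [hs]
  congr 2
  have h2 : (Multiset.filter (fun x => x ≠ 1) Δ.parts).sum = d - Δ.parts.count 1 := by omega
  rw [← hs]
  omega

lemma coeff_embedCenter {d : ℕ} (x : d.Partition → ℚ) (h : Equiv.Perm (Fin d)) :
    (embedCenter x).coeff h = x (ptype h) := by
  have hm : h ∈ Finset.univ.filter (fun g => fullCycleType g = (ptype h).parts) := by
    rw [Finset.mem_filter]
    exact ⟨Finset.mem_univ _, rfl⟩
  rw [embedCenter, MonoidAlgebra.coeff_sum, Finset.sum_apply']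
  rw [Finset.sum_eq_single (ptype h)]
  · rw [MonoidAlgebra.coeff_smul_apply, classSum, MonoidAlgebra.coeff_sum, Finset.sum_apply',
      Finset.sum_eq_single h]
    · simp
    · intro b _ hb; simp [hb]
    · intro hh; exact absurd hm hh
  · intro Δ _ hΔ
    rw [MonoidAlgebra.coeff_smul_apply, classSum, MonoidAlgebra.coeff_sum, Finset.sum_apply',
      Finset.sum_eq_zero, smul_zero]
    intro b hb
    rw [MonoidAlgebra.coeff_single, Finsupp.single_apply, if_neg]
    rintro rfl
    exact hΔ ((ptype_eq_iff _ _).mpr (Finset.mem_filter.mp hb).2).symm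
  · simp

lemma coeff_mul_embed {d : ℕ} (x y : d.Partition → ℚ) (m : Equiv.Perm (Fin d)) :
    (embedCenter x * embedCenter y).coeff m = ∑ h, x (ptype h) * y (ptype (h⁻¹ * m)) := by
  rw [MonoidAlgebra.coeff_mul_apply_left, Finsupp.sum_fintype _ _ (by simp)]
  simp only [coeff_embedCenter]

lemma ptype_conj {d : ℕ} (σ h : Equiv.Perm (Fin d)) : ptype (σ * h * σ⁻¹) = ptype h := by
  rw [ptype_eq_iff]
  exact ((full_eq_iff_conj _ _).mpr ⟨σ, rfl⟩).symm

lemma circ_ptype {d : ℕ} (x y : d.Partition → ℚ) (m : Equiv.Perm (Fin d)) :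
    circ x y (ptype m) = ∑ h, x (ptype h) * y (ptype (h⁻¹ * m)) := by
  rw [circ, classCoeff]
  have hc : ∀ k ∈ Finset.univ.filter (fun g => fullCycleType g = (ptype m).parts),
      (embedCenter x * embedCenter y).coeff k = ∑ h, x (ptype h) * y (ptype (h⁻¹ * m)) := by
    intro k hk
    obtain ⟨σ, hσ⟩ := (full_eq_iff_conj m k).mp (Finset.mem_filter.mp hk).2.symm
    rw [coeff_mul_embed, ← (MulAut.conj σ).toEquiv.sum_comp]
    apply Finset.sum_congr rfl
    intro h _
    have e1 : (MulAut.conj σ).toEquiv h = σ * h * σ⁻¹ := rfl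
    have e2 : (σ * h * σ⁻¹)⁻¹ * k = σ * (h⁻¹ * m) * σ⁻¹ := by rw [← hσ]; group
    rw [e1, e2, ptype_conj, ptype_conj]
  rw [Finset.sum_congr rfl hc, Finset.sum_const, nsmul_eq_mul, mul_div_assoc, mul_comm,
    div_mul_cancel₀]
  rw [Nat.cast_ne_zero, ← Nat.pos_iff_ne_zero, Finset.card_pos]
  exact ⟨m, Finset.mem_filter.mpr ⟨Finset.mem_univ _, rfl⟩⟩

lemma kappa_eq (p : Multiset ℕ) : kappa p = (((p.count 1).factorial : ℚ) *
    ∏ k ∈ p.toFinset.erase 1, (((p.count k).factorial : ℚ) * (k : ℚ) ^ (p.count k)))⁻¹ := by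
  rw [kappa]
  congr 1
  by_cases h : 1 ∈ p.toFinset
  · rw [← Finset.mul_prod_erase _ _ h]; simp
  · rw [Finset.erase_eq_of_notMem h, Multiset.count_eq_zero_of_notMem (by simpa using h)]
    simp

lemma kappa_pad (p : Multiset ℕ) (k : ℕ) :
    kappa (p + Multiset.replicate k 1) * (((p.count 1 + k).factorial : ℚ)) =
      kappa p * ((p.count 1).factorial : ℚ) := by
  rw [kappa_eq, kappa_eq]
  have h1 : (p + Multiset.replicate k 1).toFinset.erase 1 = p.toFinset.erase 1 := by
    ext a
    simp only [Finset.mem_erase, Multiset.mem_toFinset, Multiset.mem_add, Multiset.mem_replicate]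
    tauto
  have h2 : ∏ a ∈ p.toFinset.erase 1, ((((p + Multiset.replicate k 1).count a).factorial : ℚ) *
      (a : ℚ) ^ ((p + Multiset.replicate k 1).count a)) =
      ∏ k ∈ p.toFinset.erase 1, (((p.count k).factorial : ℚ) * (k : ℚ) ^ (p.count k)) := by
    apply Finset.prod_congr rfl
    intro a ha
    have : (p + Multiset.replicate k 1).count a = p.count a := by
      rw [Multiset.count_add, Multiset.count_replicate, if_neg (Finset.ne_of_mem_erase ha).symm,
        add_zero]
    rw [this]
  rw [h1, h2, Multiset.count_add, Multiset.count_replicate_self, mul_inv, mul_inv]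
  have ha : ((p.count 1 + k).factorial : ℚ) ≠ 0 := by exact_mod_cast Nat.factorial_ne_zero _
  have hb : ((p.count 1).factorial : ℚ) ≠ 0 := by exact_mod_cast Nat.factorial_ne_zero _
  field_simp

lemma class_card {d : ℕ} (h : Equiv.Perm (Fin d)) :
    ((Finset.univ.filter (fun k : Equiv.Perm (Fin d) => fullCycleType k = fullCycleType h)).card : ℚ)
      = (d.factorial : ℚ) * kappa (fullCycleType h) := by
  have h1 := Equiv.Perm.card_of_cycleType_mul_eq (Fin d) h.cycleType
  rw [if_pos ⟨by simpa using cycleType_sum_le h, fun a ha => Equiv.Perm.two_le_of_mem_cycleType ha⟩]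
    at h1
  have h2 : (Finset.univ.filter (fun k : Equiv.Perm (Fin d) => fullCycleType k = fullCycleType h)) =
      Finset.univ.filter (fun k : Equiv.Perm (Fin d) => k.cycleType = h.cycleType) := by
    ext k; simp [full_eq_iff]
  rw [h2]
  have h3 : kappa (fullCycleType h) = (((d - h.cycleType.sum).factorial * h.cycleType.prod *
      (∏ n ∈ h.cycleType.toFinset, (h.cycleType.count n).factorial) : ℕ) : ℚ)⁻¹ := by
    have h0 := kappa_pad h.cycleType (d - h.cycleType.sum)
    rw [Multiset.count_eq_zero_of_notMem (one_notMem_cycleType h), zero_add] at h0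
    rw [fullCycleType]
    have hb : ((d - h.cycleType.sum).factorial : ℚ) ≠ 0 := by
      exact_mod_cast Nat.factorial_ne_zero _
    rw [← eq_div_iff hb] at h0
    rw [h0, kappa, Finset.prod_multiset_count, Finset.prod_mul_distrib]
    push_cast
    rw [mul_inv, mul_inv, mul_inv]
    simp only [Nat.factorial_zero, Nat.cast_one, mul_one]
    rw [div_eq_mul_inv]
    ring
  rw [h3, eq_mul_inv_iff_mul_eq₀]
  · simp only [Fintype.card_fin] at h1
    exact_mod_cast h1
  · rw [Nat.cast_ne_zero]
    intro h4
    rw [Fintype.card_fin, h4, mul_zero] at h1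
    exact Nat.factorial_ne_zero _ h1.symm

lemma full_via {d n : ℕ} (g : Equiv.Perm (Fin n)) (ι : Fin n ↪ Fin d) :
    fullCycleType (g.viaFintypeEmbedding ι) = fullCycleType g + Multiset.replicate (d - n) 1 := by
  have h1 : (g.viaFintypeEmbedding ι).cycleType = g.cycleType := by
    rw [Equiv.Perm.viaFintypeEmbedding]
    exact Equiv.Perm.cycleType_extendDomain _
  have h2 := cycleType_sum_le g
  have h3 : n ≤ d := by simpa using Fintype.card_le_of_embedding ι
  rw [fullCycleType, h1, fullCycleType, add_assoc, ← Multiset.replicate_add]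
  congr 2
  omega

lemma via_conj {d n : ℕ} (g : Equiv.Perm (Fin n)) (ι : Fin n ↪ Fin d) (σ : Equiv.Perm (Fin d)) :
    g.viaFintypeEmbedding (ι.trans σ.toEmbedding) = σ * g.viaFintypeEmbedding ι * σ⁻¹ := by
  rw [eq_mul_inv_iff_mul_eq]
  ext1 j
  simp only [Equiv.Perm.mul_apply]
  by_cases hj : j ∈ Set.range ι
  · obtain ⟨i, rfl⟩ := hj
    rw [Equiv.Perm.viaFintypeEmbedding_apply_image]
    exact Equiv.Perm.viaFintypeEmbedding_apply_image g (ι.trans σ.toEmbedding) i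
  · rw [Equiv.Perm.viaFintypeEmbedding_apply_notMem_range _ _ hj,
      Equiv.Perm.viaFintypeEmbedding_apply_notMem_range]
    rintro ⟨i, hi⟩
    exact hj ⟨i, σ.injective hi⟩

lemma emb_count {d n : ℕ} (hnd : n ≤ d) (g : Equiv.Perm (Fin n)) (h : Equiv.Perm (Fin d))
    (hh : fullCycleType h = fullCycleType g + Multiset.replicate (d - n) 1) :
    kappa (fullCycleType g) *
      ((Finset.univ.filter (fun ι : Fin n ↪ Fin d => g.viaFintypeEmbedding ι = h)).card : ℚ) =
    (((fullCycleType g).count 1 + (d - n)).factorial : ℚ) /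
      (((fullCycleType g).count 1).factorial * (d - n).factorial) := by
  set C := Finset.univ.filter (fun k : Equiv.Perm (Fin d) => fullCycleType k = fullCycleType h)
  have hconst : ∀ k ∈ C,
      (Finset.univ.filter (fun ι : Fin n ↪ Fin d => g.viaFintypeEmbedding ι = k)).card =
      (Finset.univ.filter (fun ι : Fin n ↪ Fin d => g.viaFintypeEmbedding ι = h)).card := by
    intro k hk
    obtain ⟨σ, hσ⟩ := (full_eq_iff_conj k h).mp (Finset.mem_filter.mp hk).2
    apply Finset.card_bij' (fun ι _ => ι.trans σ.toEmbedding)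
      (fun ι _ => ι.trans (σ⁻¹).toEmbedding)
    · intro ι hι
      ext i; simp
    · intro ι hι
      ext i; simp
    · intro ι hι
      simp only [Finset.mem_filter, Finset.mem_univ, true_and] at hι ⊢
      rw [via_conj, hι, hσ]
    · intro ι hι
      simp only [Finset.mem_filter, Finset.mem_univ, true_and] at hι ⊢
      rw [via_conj, hι, ← hσ]; group
  have htot : (Finset.univ : Finset (Fin n ↪ Fin d)).card = ∑ k ∈ C,
      (Finset.univ.filter (fun ι : Fin n ↪ Fin d => g.viaFintypeEmbedding ι = k)).card := by
    apply Finset.card_eq_sum_card_fiberwise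
    intro ι _
    simp [C, hh, full_via]
  rw [Finset.sum_congr rfl hconst, Finset.sum_const, smul_eq_mul, Finset.card_univ,
    Fintype.card_embedding_eq, Fintype.card_fin, Fintype.card_fin] at htot
  have hfac := Nat.factorial_mul_descFactorial hnd
  rw [htot] at hfac
  have hcl := class_card h
  have hk := kappa_pad (fullCycleType g) (d - n)
  rw [← hh] at hk
  have q : ((d - n).factorial : ℚ) * (((d.factorial : ℚ) * kappa (fullCycleType h)) *
    ((Finset.univ.filter (fun ι : Fin n ↪ Fin d => g.viaFintypeEmbedding ι = h)).card : ℚ)) =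
    (d.factorial : ℚ) := by
    rw [← hcl]; exact_mod_cast hfac
  generalize ((Finset.univ.filter (fun ι : Fin n ↪ Fin d => g.viaFintypeEmbedding ι = h)).card : ℚ)
    = c at q ⊢
  have hd : (d.factorial : ℚ) ≠ 0 := by exact_mod_cast Nat.factorial_ne_zero _
  have hb : (((fullCycleType g).count 1).factorial : ℚ) ≠ 0 := by
    exact_mod_cast Nat.factorial_ne_zero _
  have hdn : ((d - n).factorial : ℚ) ≠ 0 := by exact_mod_cast Nat.factorial_ne_zero _
  have q' : ((d - n).factorial : ℚ) * (kappa (fullCycleType h) * c) = 1 := by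
    apply mul_left_cancel₀ hd
    linear_combination q
  rw [eq_div_iff (mul_ne_zero hb hdn)]
  linear_combination (-(c * ((d - n).factorial : ℚ))) * hk +
    (((fullCycleType g).count 1 + (d - n)).factorial : ℚ) * q'


/-- action of class functions on monomials -/
noncomputable def Act {N d : ℕ} (φ : d.Partition → ℚ) (u : Fin d → Fin N × Fin N) : RN N :=
  ∑ h : Equiv.Perm (Fin d), φ (ptype h) • Mon (twist h u)

lemma rhoTo_diagC {n : ℕ} (d : ℕ) (Δ : n.Partition) (Λ : d.Partition) :
    rhoTo d (diagC Δ) Λ = if n ≤ d then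
      (if Λ.parts = Δ.parts + Multiset.replicate (d - n) 1 then
          (((Δ.parts.count 1 + (d - n)).factorial : ℚ) /
            ((Δ.parts.count 1).factorial * (d - n).factorial)) else 0) else 0 := by
  rw [rhoTo]
  split_ifs with h1 h2
  · rw [Finset.sum_eq_single Δ]
    · simp [h2, diagC]
    · intro b _ hb; simp [diagC, hb]
    · simp
  · apply Finset.sum_eq_zero
    intro b _
    by_cases hb : b = Δ
    · subst hb; rw [if_neg h2]
    · simp [diagC, hb]
  · rfl

lemma rhoTo_linear {n : ℕ} (d : ℕ) (x : n.Partition → ℚ) :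
    rhoTo d x = ∑ Δ, x Δ • rhoTo d (diagC Δ) := by
  ext Λ
  rw [Finset.sum_apply]
  simp only [Pi.smul_apply, rhoTo_diagC, smul_eq_mul]
  rw [rhoTo]
  split_ifs with h
  · apply Finset.sum_congr rfl
    intro Δ _
    split_ifs <;> ring
  · simp

lemma rhoTo_self {n : ℕ} (x : n.Partition → ℚ) : rhoTo n x = x := by
  ext Λ
  rw [rhoTo, if_pos le_rfl, Finset.sum_eq_single Λ]
  · have : ((Λ.parts.count 1).factorial : ℚ) ≠ 0 := by exact_mod_cast Nat.factorial_ne_zero _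
    simp [this]
  · intro b _ hb
    rw [if_neg]
    intro h
    apply hb
    rw [Nat.Partition.ext_iff, h]; simp
  · simp

lemma rhoTo_lt {n d : ℕ} (h : d < n) (x : n.Partition → ℚ) : rhoTo d x = 0 := by
  ext Λ
  rw [rhoTo, if_neg (by omega)]; rfl

lemma WL_Act {N d n : ℕ} (Δ : Nat.Partition n) (g : Equiv.Perm (Fin n))
    (hg : fullCycleType g = Δ.parts) (u : Fin d → Fin N × Fin N) :
    WL N Δ g (Mon u) = Act (rhoTo d (diagC Δ)) u := by
  rw [WL_Mon, Act, ← Finset.sum_fiberwise Finset.univ (fun ι : Fin n ↪ Fin d => g.viaFintypeEmbedding ι),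
    Finset.smul_sum]
  apply Finset.sum_congr rfl
  intro h _
  rw [Finset.sum_congr rfl (g := fun _ => Mon (twist h u)) (by
    intro ι hι
    rw [(Finset.mem_filter.mp hι).2]), Finset.sum_const, ← Nat.cast_smul_eq_nsmul ℚ, smul_smul]
  congr 1
  rw [rhoTo_diagC]
  by_cases hnd : n ≤ d
  · rw [if_pos hnd]
    by_cases hh : (ptype h).parts = Δ.parts + Multiset.replicate (d - n) 1
    · rw [if_pos hh, ← hg]
      exact emb_count hnd g h (by rw [hg]; exact hh)
    · rw [if_neg hh, Finset.filter_false_of_mem]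
      · simp
      · rintro ι - rfl
        apply hh
        rw [← hg]
        exact full_via g ι
  · rw [if_neg hnd, Finset.filter_false_of_mem]
    · simp
    · intro ι _
      exact absurd (by simpa using Fintype.card_le_of_embedding ι) hnd

lemma Act_circ {N d : ℕ} (x y : d.Partition → ℚ) (u : Fin d → Fin N × Fin N) :
    ∑ k : Equiv.Perm (Fin d), y (ptype k) • Act x (twist k u) = Act (circ x y) u := by
  simp only [Act, circ_ptype, twist_twist, Finset.sum_smul, Finset.smul_sum, smul_smul]
  rw [Finset.sum_comm]
  conv_rhs => rw [Finset.sum_comm]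
  apply Finset.sum_congr rfl
  intro h _
  rw [← Equiv.sum_comp (Equiv.mulLeft h) (fun m => (x (ptype h) * y (ptype (h⁻¹ * m))) • Mon (twist m u))]
  apply Finset.sum_congr rfl
  intro k _
  simp only [Equiv.coe_mulLeft, inv_mul_cancel_left]
  rw [mul_comm]

lemma circ_zero_left {d : ℕ} (y : d.Partition → ℚ) : circ 0 y = 0 := by
  ext Λ
  simp [circ, embedCenter, classCoeff]

lemma circ_zero_right {d : ℕ} (y : d.Partition → ℚ) : circ y 0 = 0 := by
  ext Λ
  simp [circ, embedCenter, classCoeff]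

lemma bracket_sum {n₁ n₂ : ℕ} (Δ₁ : n₁.Partition) (Δ₂ : n₂.Partition) (d : ℕ) (hd : d ≤ n₁ + n₂) :
    ∑ n ∈ Finset.Icc (max n₁ n₂) (n₁ + n₂), rhoTo d (bracket Δ₁ Δ₂ n) =
      circ (rhoTo d (diagC Δ₁)) (rhoTo d (diagC Δ₂)) := by
  by_cases hm : max n₁ n₂ ≤ d
  · have hsub : Finset.Icc (max n₁ n₂) d ⊆ Finset.Icc (max n₁ n₂) (n₁ + n₂) :=
      Finset.Icc_subset_Icc le_rfl hd
    rw [← Finset.sum_subset hsub, ← Finset.Ico_insert_right hm, Finset.sum_insert (by simp),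
      rhoTo_self, bracket, if_pos ⟨hm, hd⟩,
      Finset.sum_attach (Finset.Ico (max n₁ n₂) d) (fun k => rhoTo d (bracket Δ₁ Δ₂ k))]
    · abel
    · intro n h1 h2
      rw [Finset.mem_Icc] at h1 h2
      exact rhoTo_lt (by omega) _
  · rw [Finset.sum_eq_zero]
    · rcases lt_max_iff.mp (not_le.mp hm) with h | h
      · rw [rhoTo_lt h, circ_zero_left]
      · rw [rhoTo_lt h, circ_zero_right]
    · intro n h1
      rw [Finset.mem_Icc] at h1
      exact rhoTo_lt (by omega) _

lemma Act_sum {N d : ℕ} {ι : Type*} (s : Finset ι) (φ : ι → d.Partition → ℚ)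
    (u : Fin d → Fin N × Fin N) : Act (∑ i ∈ s, φ i) u = ∑ i ∈ s, Act (φ i) u := by
  simp only [Act, Finset.sum_apply, Finset.sum_smul]
  rw [Finset.sum_comm]

lemma Act_smul {N d : ℕ} (c : ℚ) (φ : d.Partition → ℚ)
    (u : Fin d → Fin N × Fin N) : Act (c • φ) u = c • Act φ u := by
  simp only [Act, Pi.smul_apply, Finset.smul_sum, smul_smul, smul_eq_mul]

/-- a chosen permutation for each diagram -/
noncomputable def rep {n : ℕ} (Δ : n.Partition) : Equiv.Perm (Fin n) := (exists_full Δ).choose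

lemma rep_spec {n : ℕ} (Δ : n.Partition) : fullCycleType (rep Δ) = Δ.parts :=
  (exists_full Δ).choose_spec

lemma WL_comp (N : ℕ) {n₁ n₂ : ℕ} (Δ₁ : n₁.Partition) (Δ₂ : n₂.Partition) :
    WL N Δ₁ (rep Δ₁) ∘ₗ WL N Δ₂ (rep Δ₂) =
      ∑ n ∈ Finset.Icc (max n₁ n₂) (n₁ + n₂),
          ∑ Δ : Nat.Partition n, bracket Δ₁ Δ₂ n Δ • WL N Δ (rep Δ) := by
  rw [← sub_eq_zero]
  refine OrdLe.eq_zero (m := n₁ + n₂) ?_ ?_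
  · rw [sub_eq_add_neg, ← neg_one_smul ℚ]
    apply OrdLe.add
    · exact OrdLe.comp _ rfl (ordLe_WL _ _ _) (ordLe_WL _ _ _)
    · apply OrdLe.smul
      apply OrdLe.sum
      intro n hn
      apply OrdLe.sum
      intro Δ _
      apply OrdLe.smul
      exact (ordLe_WL _ _ _).mono (Finset.mem_Icc.mp hn).2
  · intro d hd u
    rw [LinearMap.sub_apply, sub_eq_zero, LinearMap.comp_apply, WL_Act _ _ (rep_spec Δ₂), Act,
      map_sum]
    simp only [map_smul, WL_Act _ _ (rep_spec Δ₁), LinearMap.sum_apply, LinearMap.smul_apply]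
    rw [Act_circ, ← bracket_sum Δ₁ Δ₂ d hd, Act_sum]
    apply Finset.sum_congr rfl
    intro n _
    rw [rhoTo_linear, Act_sum]
    apply Finset.sum_congr rfl
    intro Δ _
    rw [Act_smul, WL_Act _ _ (rep_spec Δ)]

/-- exponent of a monomial -/
noncomputable def expo {N d : ℕ} (u : Fin d → Fin N × Fin N) : Fin N × Fin N →₀ ℕ :=
  ∑ j, Finsupp.single (u j) 1

lemma Mon_eq {N d : ℕ} (u : Fin d → Fin N × Fin N) :
    Mon u = MvPolynomial.monomial (expo u) (1 : ℚ) := by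
  rw [expo, MvPolynomial.monomial_sum_one]
  rfl

lemma mem_of_expo_eq {N d : ℕ} {u w : Fin d → Fin N × Fin N} (h : expo u = expo w) (j : Fin d) :
    ∃ i, w i = u j := by
  by_contra hc
  push Not at hc
  have h1 := DFunLike.congr_fun h (u j)
  rw [expo, expo, Finset.sum_apply', Finset.sum_apply',
    Finset.sum_eq_zero (s := Finset.univ) (f := fun k => (Finsupp.single (w k) 1 : _ →₀ ℕ) (u j))
      (by intro k _; rw [Finsupp.single_apply, if_neg (hc k)]),
    Finset.sum_eq_zero_iff] at h1
  simpa using h1 j (Finset.mem_univ _)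

lemma ptype_of_expo {n : ℕ} (σ h : Equiv.Perm (Fin n)) (c : Fin n → Fin n)
    (he : expo (twist h (fun j => (c j, c j))) = expo (twist σ (fun j => (j, j)))) :
    ptype h = ptype σ := by
  have hs : Function.Surjective c := by
    intro i
    obtain ⟨j, hj⟩ := mem_of_expo_eq he.symm i
    exact ⟨j, by simpa [twist] using congrArg Prod.snd hj⟩
  have hb : Function.Bijective c := Finite.surjective_iff_bijective.mp hs
  have hc : ∀ j, c (h⁻¹ j) = σ⁻¹ (c j) := by
    intro j
    obtain ⟨i, hi⟩ := mem_of_expo_eq he j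
    simp only [twist, Prod.mk.injEq] at hi
    rw [← hi.1, hi.2]
  let τ := Equiv.ofBijective c hb
  have : τ * h * τ⁻¹ = σ := by
    have h2 : τ * h⁻¹ = σ⁻¹ * τ := by
      ext1 j
      exact hc j
    have h3 : σ⁻¹ = τ * h⁻¹ * τ⁻¹ := by rw [h2]; group
    rw [← inv_inv σ, h3]; group
  rw [← this, ptype_conj]

lemma coeff_Act {n : ℕ} (σ : Equiv.Perm (Fin n)) (φ : n.Partition → ℚ) (c : Fin n → Fin n) :
    MvPolynomial.coeff (expo (twist σ (fun j => ((j, j) : Fin n × Fin n))))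
      (Act φ (fun j => (c j, c j))) = φ (ptype σ) *
      ∑ h : Equiv.Perm (Fin n), if expo (twist h (fun j => (c j, c j))) =
        expo (twist σ (fun j => ((j, j) : Fin n × Fin n))) then (1 : ℚ) else 0 := by
  rw [Act, MvPolynomial.coeff_sum, Finset.mul_sum]
  apply Finset.sum_congr rfl
  intro h _
  rw [MvPolynomial.coeff_smul, Mon_eq, MvPolynomial.coeff_monomial, smul_eq_mul]
  split_ifs with he
  · rw [ptype_of_expo σ h c he]
  · simp

lemma psubst_p1_pow (n : ℕ) : psubst n (MvPolynomial.X 1 ^ n) =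
    ∑ c : Fin n → Fin n, Mon (fun j : Fin n => (c j, c j)) := by
  rw [map_pow, psubst, MvPolynomial.aeval_X, pSub, PNat.one_coe, pow_one, Matrix.trace,
    Fintype.sum_pow]
  rfl

lemma coeff_WL {n : ℕ} (σ : Equiv.Perm (Fin n)) : ∃ K : ℚ, 0 < K ∧ ∀ (m : ℕ) (Δ : m.Partition),
    MvPolynomial.coeff (expo (twist σ (fun j => ((j, j) : Fin n × Fin n))))
      (WL n Δ (rep Δ) (psubst n (MvPolynomial.X 1 ^ n))) =
      rhoTo n (diagC Δ) (ptype σ) * K := by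
  refine ⟨∑ c : Fin n → Fin n,
      ∑ h : Equiv.Perm (Fin n), if expo (twist h (fun j => (c j, c j))) =
        expo (twist σ (fun j => ((j, j) : Fin n × Fin n))) then (1 : ℚ) else 0, ?_, ?_⟩
  · have hnn : ∀ (c : Fin n → Fin n) (h : Equiv.Perm (Fin n)),
        (0 : ℚ) ≤ if expo (twist h (fun j => (c j, c j))) =
        expo (twist σ (fun j => ((j, j) : Fin n × Fin n))) then (1 : ℚ) else 0 := by
      intro c h; split_ifs <;> simp
    apply Finset.sum_pos'
    · intro c _
      exact Finset.sum_nonneg fun h _ => hnn c h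
    · refine ⟨id, Finset.mem_univ _, ?_⟩
      apply Finset.sum_pos'
      · intro h _; exact hnn id h
      · exact ⟨σ, Finset.mem_univ _, by simp⟩
  · intro m Δ
    rw [psubst_p1_pow, map_sum, MvPolynomial.coeff_sum, Finset.mul_sum]
    apply Finset.sum_congr rfl
    intro c _
    rw [WL_Act _ _ (rep_spec Δ), coeff_Act]

/-- `𝗪(Δ)` is characterized as the (unique) linear operator on `ℚ[p₁,p₂,…]` such that
`(𝗪(Δ)F)(p(X)) = 𝒲_N(Δ)(F(p(X)))` for every `N` and every `F`; the theorem states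
that any family `W` with this property represents the algebra `A_∞°` faithfully. -/
theorem W_representation_of_A_infinity
    (W : ∀ n : ℕ, Nat.Partition n → (MvPolynomial ℕ+ ℚ →ₗ[ℚ] MvPolynomial ℕ+ ℚ))
    (hW : ∀ (n : ℕ) (Δ : Nat.Partition n) (g : Equiv.Perm (Fin n)),
      fullCycleType g = Δ.parts →
      ∀ (N : ℕ) (F : MvPolynomial ℕ+ ℚ),
        psubst N (W n Δ F) = WN N Δ g (psubst N F)) :
    (∀ (n₁ n₂ : ℕ) (Δ₁ : Nat.Partition n₁) (Δ₂ : Nat.Partition n₂),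
      (W n₁ Δ₁) ∘ₗ (W n₂ Δ₂) =
        ∑ n ∈ Finset.Icc (max n₁ n₂) (n₁ + n₂),
          ∑ Δ : Nat.Partition n, bracket Δ₁ Δ₂ n Δ • W n Δ) ∧
    LinearIndependent ℚ (fun D : Σ n : ℕ, Nat.Partition n => W D.1 D.2) := by
  have hL : ∀ (n : ℕ) (Δ : Nat.Partition n) (N : ℕ) (F : MvPolynomial ℕ+ ℚ),
      psubst N (W n Δ F) = WL N Δ (rep Δ) (psubst N F) := by
    intro n Δ N F
    rw [hW n Δ (rep Δ) (rep_spec Δ), WL_apply]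
  constructor
  · intro n₁ n₂ Δ₁ Δ₂
    apply LinearMap.ext
    intro F
    rw [← sub_eq_zero]
    apply psubst_jointly_injective
    intro N
    rw [map_sub, sub_eq_zero, LinearMap.comp_apply, hL, hL, ← LinearMap.comp_apply, WL_comp]
    simp only [LinearMap.sum_apply, LinearMap.smul_apply, map_sum, map_smul, hL]
  · rw [linearIndependent_iff']
    intro s c hs
    have main : ∀ (n : ℕ) (Δ : n.Partition), (⟨n, Δ⟩ : Σ n : ℕ, Nat.Partition n) ∈ s →
        c ⟨n, Δ⟩ = 0 := by
      intro n
      induction n using Nat.strong_induction_on with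
      | _ n ih =>
        intro Δ hΔ
        obtain ⟨K, hK, hco⟩ := coeff_WL (rep Δ)
        have hp : ptype (rep Δ) = Δ := (ptype_eq_iff _ _).mpr (rep_spec Δ)
        have h1 := congrArg (fun L => MvPolynomial.coeff
          (expo (twist (rep Δ) (fun j => ((j, j) : Fin n × Fin n))))
          (psubst n (L (MvPolynomial.X 1 ^ n)))) hs
        simp only [LinearMap.sum_apply, LinearMap.smul_apply, map_sum, map_smul, hL,
          MvPolynomial.coeff_sum, MvPolynomial.coeff_smul, hco, hp, LinearMap.zero_apply, map_zero,
          MvPolynomial.coeff_zero, smul_eq_mul] at h1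
        rw [Finset.sum_eq_single_of_mem _ hΔ, rhoTo_self] at h1
        · simpa [diagC, hK.ne'] using h1
        · rintro ⟨m, Λ⟩ hm hne
          rcases lt_trichotomy m n with h | h | h
          · rw [ih m h Λ hm, zero_mul]
          · subst h
            have hne' : Δ ≠ Λ := fun e => hne (by rw [e])
            simp only [rhoTo_self, diagC, if_neg hne', zero_mul, mul_zero]
          · simp [rhoTo_lt h]
    rintro ⟨n, Δ⟩ hi
    exact main n Δ hi
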